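/- Let G be a finite-dimensional Lie algebra over a field k and let O : G* → G be a skewsymmetric O-operator, where G* carries the coadjoint action. Equip G* with the Lie bracket [u, v] = O(u)·v − O(v)·u. Then the skewsymmetric bilinear form Ω on G* defined by Ω(u, v) = ⟨u, O(v)⟩ is a 2-cocycle on the Lie algebra G*; i.e., Ω([u, v], w) + Ω([v, w], u) + Ω([w, u], v) = 0 for all u, v, w ∈ G*. -/

import Mathlib

/-- The coadjoint action of `X ∈ G` on `u ∈ G*`: `⟨X·u, Y⟩ = −⟨u, [X, Y]⟩`. -/
noncomputable def coad {k : Type*} [Field k] {L : Type*} [LieRing L] [LieAlgebra k L]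
    (X : L) (u : Module.Dual k L) : Module.Dual k L :=
  - (u ∘ₗ (LieAlgebra.ad k L X))

/-!
By the `O`-operator identity and skewsymmetry,
`⟨[u, v], O(w)⟩ = −⟨w, O([u, v])⟩ = −⟨w, [O(u), O(v)]⟩`, while expanding the coadjoint action gives
`⟨[u, v], O(w)⟩ = ⟨u, [O(v), O(w)]⟩ + ⟨v, [O(w), O(u)]⟩`. Hence the cyclic sum of
`⟨u, [O(v), O(w)]⟩` vanishes, and the cocycle sum is twice that cyclic sum.
-/

/-- The bracket `[u, v] = O(u)·v − O(v)·u` that a map `O : M → L` induces on an `L`-module `M`. -/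
def oBracket {L M : Type*} [LieRing L] [AddCommGroup M] [LieRingModule L M]
    (O : M → L) (u v : M) : M :=
  ⁅O u, v⁆ - ⁅O v, u⁆

/-- `O : M → L` is an `O`-operator if it carries the bracket it induces on the `L`-module `M` to the
Lie bracket of `L`. Linearity of `O` is not part of the definition. -/
def IsOOperator {L M : Type*} [LieRing L] [AddCommGroup M] [LieRingModule L M]
    (O : M → L) : Prop :=
  ∀ u v : M, O (oBracket O u v) = ⁅O u, O v⁆

section Dual

variable {R L : Type*} [CommRing R] [LieRing L] [LieAlgebra R L] {O : Module.Dual R L → L}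

theorem oBracket_apply (O : Module.Dual R L → L) (u v : Module.Dual R L) (z : L) :
    oBracket O u v z = u ⁅O v, z⁆ + v ⁅z, O u⁆ := by
  have v_swap : v ⁅O u, z⁆ = -v ⁅z, O u⁆ := by rw [← lie_skew, map_neg]
  simp only [oBracket, LinearMap.sub_apply, Module.Dual.lie_apply, v_swap]
  ring

/- When `L` is finite free and `O` is linear, this is, up to sign, the classical Yang–Baxter
equation for the tensor in `L ⊗ L` representing `O`, evaluated at `u ⊗ v ⊗ w`. -/
theorem IsOOperator.cyclic_sum_apply_lie_eq_zero (hO : IsOOperator O)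
    (hskew : ∀ u v : Module.Dual R L, u (O v) + v (O u) = 0) (u v w : Module.Dual R L) :
    u ⁅O v, O w⁆ + v ⁅O w, O u⁆ + w ⁅O u, O v⁆ = 0 :=
  calc u ⁅O v, O w⁆ + v ⁅O w, O u⁆ + w ⁅O u, O v⁆
      = oBracket O u v (O w) + w (O (oBracket O u v)) := by rw [oBracket_apply, hO]
    _ = 0 := hskew _ _

theorem Omega_is_two_cocycle_general (hO : IsOOperator O)
    (hskew : ∀ u v : Module.Dual R L, u (O v) + v (O u) = 0) (u v w : Module.Dual R L) :
    oBracket O u v (O w) + oBracket O v w (O u) + oBracket O w u (O v) = 0 := by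
  simp only [oBracket_apply]
  linear_combination 2 * hO.cyclic_sum_apply_lie_eq_zero hskew u v w

end Dual

theorem coad_eq_lie {k : Type*} [Field k] {L : Type*} [LieRing L] [LieAlgebra k L]
    (X : L) (u : Module.Dual k L) : coad X u = ⁅X, u⁆ :=
  rfl

/-- **Proposition 2.19.** For a skewsymmetric `O`-operator `O : G* → G`, the
form `Ω(u, v) = ⟨u, O(v)⟩` is a 2-cocycle on `G*` equipped with the bracket
`[u, v] = O(u)·v − O(v)·u`. -/
theorem Omega_is_two_cocycle (k : Type*) [Field k]
    (L : Type*) [LieRing L] [LieAlgebra k L] [FiniteDimensional k L]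
    (O : Module.Dual k L →ₗ[k] L)
    (hskew : ∀ u v : Module.Dual k L, u (O v) + v (O u) = 0)
    (hO : ∀ u v : Module.Dual k L,
      O (coad (O u) v - coad (O v) u) = ⁅O u, O v⁆) :
    ∀ u v w : Module.Dual k L,
      (coad (O u) v - coad (O v) u) (O w)
        + (coad (O v) w - coad (O w) v) (O u)
        + (coad (O w) u - coad (O u) w) (O v) = 0 := by
  simp only [coad_eq_lie] at hO ⊢
  exact Omega_is_two_cocycle_general hO hskew
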